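/- arXiv:2105.14247 — 10 statements merged into one kernel-verified Lean document; each statement's English description precedes it below -/
import Mathlib

section
/- Let G be a reachability game and let T ⊆ S × S be a transition predicate. Suppose that player REACH wins from every state in Post(T). Then player REACH wins from every state in Pre(Enf(T, G)). -/
universe u

/-- A reachability game over a state type `S`. States with `isReach s` are
controlled by player REACH, the others by player SAFE. -/
structure Game (S : Type u) where
  isReach : S → Prop
  Safe : S → S → Prop
  Reach : S → S → Prop
  Init : Set S
  Goal : Set S
  safe_src : ∀ s s', Safe s s' → ¬ isReach s
  reach_src : ∀ s s', Reach s s' → isReach s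

namespace Game

variable {S : Type u}

/-- The edge relation `E = Safe ∪ Reach`. -/
def E (G : Game S) (s s' : S) : Prop := G.Safe s s' ∨ G.Reach s s'

/-- A trap state has no outgoing `E`-transition. -/
def Trap (G : Game S) (s : S) : Prop := ∀ s', ¬ G.E s s'

/-- A play: an `E`-path which is infinite (`len = ⊤`) or finite
(`len = n`) and then ends in a trap state. Values of `seq` beyond a finite
length are irrelevant. -/
structure Play (G : Game S) where
  seq : ℕ → S
  len : ℕ∞
  step : ∀ i : ℕ, (i : ℕ∞) < len → G.E (seq i) (seq (i + 1))
  fin_trap : ∀ n : ℕ, len = (n : ℕ∞) → G.Trap (seq n)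

/-- REACH wins a play if some state of the play is a goal state. -/
def ReachWinsPlay (G : Game S) (p : G.Play) : Prop :=
  ∃ k : ℕ, (k : ℕ∞) ≤ p.len ∧ p.seq k ∈ G.Goal

/-- SAFE wins a play iff REACH does not. -/
def SafeWinsPlay (G : Game S) (p : G.Play) : Prop := ¬ G.ReachWinsPlay p

/-- The list `[f 0, …, f (n-1)]`. -/
def listPrefix (f : ℕ → S) (n : ℕ) : List S := (List.range n).map f

/-- A reachability strategy: on any nonempty sequence ending in a non-trap
REACH state it chooses a `Reach`-successor. -/
def IsReachStrategy (G : Game S) (σ : List S → S) : Prop :=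
  ∀ (ω : List S) (s : S), G.isReach s → ¬ G.Trap s → G.Reach s (σ (ω ++ [s]))

/-- A safety strategy: on any nonempty sequence ending in a non-trap SAFE
state it chooses a `Safe`-successor. -/
def IsSafeStrategy (G : Game S) (σ : List S → S) : Prop :=
  ∀ (ω : List S) (s : S), ¬ G.isReach s → ¬ G.Trap s → G.Safe s (σ (ω ++ [s]))

/-- Consistency of a play with a reachability strategy. -/
def ConsistentR (G : Game S) (σ : List S → S) (p : G.Play) : Prop :=
  ∀ i : ℕ, (i : ℕ∞) < p.len → G.isReach (p.seq i) →
    p.seq (i + 1) = σ (listPrefix p.seq (i + 1))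

/-- Consistency of a play with a safety strategy. -/
def ConsistentS (G : Game S) (σ : List S → S) (p : G.Play) : Prop :=
  ∀ i : ℕ, (i : ℕ∞) < p.len → ¬ G.isReach (p.seq i) →
    p.seq (i + 1) = σ (listPrefix p.seq (i + 1))

/-- `σ` is a reachability strategy winning from `s`. -/
def WinningReachStrategyFrom (G : Game S) (σ : List S → S) (s : S) : Prop :=
  G.IsReachStrategy σ ∧
    ∀ p : G.Play, p.seq 0 = s → G.ConsistentR σ p → G.ReachWinsPlay p

/-- `σ` is a safety strategy winning from `s`. -/
def WinningSafeStrategyFrom (G : Game S) (σ : List S → S) (s : S) : Prop :=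
  G.IsSafeStrategy σ ∧
    ∀ p : G.Play, p.seq 0 = s → G.ConsistentS σ p → G.SafeWinsPlay p

/-- REACH wins from `s`. -/
def ReachWinsFrom (G : Game S) (s : S) : Prop :=
  ∃ σ : List S → S, G.WinningReachStrategyFrom σ s

/-- SAFE wins from `s`. -/
def SafeWinsFrom (G : Game S) (s : S) : Prop :=
  ∃ σ : List S → S, G.WinningSafeStrategyFrom σ s

/-- Sources of a transition predicate. -/
def Pre (T : S → S → Prop) : Set S := {s | ∃ s', T s s'}

/-- Targets of a transition predicate. -/
def Post (T : S → S → Prop) : Set S := {s' | ∃ s, T s s'}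

/-- Enforceable transitions of `T` in `G`. -/
def Enf (G : Game S) (T : S → S → Prop) (s s' : S) : Prop :=
  G.E s s' ∧ T s s' ∧ ∀ s'', G.Safe s s'' → T s s''

/-- `C` is a necessary subgoal: every play of `G` (from `Init`) reaching
`Goal` at index `n` crosses `C` at some index `k < n`. -/
def NecessarySubgoal (G : Game S) (C : S → S → Prop) : Prop :=
  ∀ p : G.Play, p.seq 0 ∈ G.Init →
    ∀ n : ℕ, (n : ℕ∞) ≤ p.len → p.seq n ∈ G.Goal →
      ∃ k < n, C (p.seq k) (p.seq (k + 1))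

/-- `ρ 0 … ρ n` is a play prefix: an `E`-path avoiding `Goal` whose last
state is not a trap state. -/
def IsPlayPrefix (G : Game S) (ρ : ℕ → S) (n : ℕ) : Prop :=
  (∀ i < n, G.E (ρ i) (ρ (i + 1))) ∧ (∀ j ≤ n, ρ j ∉ G.Goal) ∧ ¬ G.Trap (ρ n)

/-- Conformance of a play prefix with a symbolic reachability strategy. -/
def PrefixConformsR (G : Game S) (𝔖 : S → S → Prop) (ρ : ℕ → S) (n : ℕ) : Prop :=
  ∀ j < n, G.isReach (ρ j) → 𝔖 (ρ j) (ρ (j + 1))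

/-- Conformance of a play prefix with a symbolic safety strategy. -/
def PrefixConformsS (G : Game S) (𝔖 : S → S → Prop) (ρ : ℕ → S) (n : ℕ) : Prop :=
  ∀ j < n, ¬ G.isReach (ρ j) → 𝔖 (ρ j) (ρ (j + 1))

/-- A play conforms to a symbolic reachability strategy if all its play
prefixes do. -/
def PlayConformsR (G : Game S) (𝔖 : S → S → Prop) (p : G.Play) : Prop :=
  ∀ n : ℕ, (n : ℕ∞) ≤ p.len → G.IsPlayPrefix p.seq n → G.PrefixConformsR 𝔖 p.seq n

/-- A play conforms to a symbolic safety strategy if all its play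
prefixes do. -/
def PlayConformsS (G : Game S) (𝔖 : S → S → Prop) (p : G.Play) : Prop :=
  ∀ n : ℕ, (n : ℕ∞) ≤ p.len → G.IsPlayPrefix p.seq n → G.PrefixConformsS 𝔖 p.seq n

/-- `𝔖` is a winning symbolic reachability strategy from `s`. -/
def WinningSymbolicReachFrom (G : Game S) (𝔖 : S → S → Prop) (s : S) : Prop :=
  (∀ a b, 𝔖 a b → G.E a b) ∧
  (∀ p : G.Play, p.seq 0 = s → G.PlayConformsR 𝔖 p → G.ReachWinsPlay p) ∧
  (∀ (ρ : ℕ → S) (n : ℕ), ρ 0 = s → G.IsPlayPrefix ρ n → G.PrefixConformsR 𝔖 ρ n →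
      G.isReach (ρ n) → ∃ s', 𝔖 (ρ n) s' ∧ G.Reach (ρ n) s')

/-- `𝔖` is a winning symbolic safety strategy from `s`. -/
def WinningSymbolicSafeFrom (G : Game S) (𝔖 : S → S → Prop) (s : S) : Prop :=
  (∀ a b, 𝔖 a b → G.E a b) ∧
  (∀ p : G.Play, p.seq 0 = s → G.PlayConformsS 𝔖 p → G.SafeWinsPlay p) ∧
  (∀ (ρ : ℕ → S) (n : ℕ), ρ 0 = s → G.IsPlayPrefix ρ n → G.PrefixConformsS 𝔖 ρ n →
      ¬ G.isReach (ρ n) → ∃ s', 𝔖 (ρ n) s' ∧ G.Safe (ρ n) s')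

/-- Bisimulations on `G`. -/
def IsBisimulation (G : Game S) (R : S → S → Prop) : Prop :=
  ∀ s1 s2, R s1 s2 →
    ((s1 ∈ G.Goal ↔ s2 ∈ G.Goal) ∧ (s1 ∈ G.Init ↔ s2 ∈ G.Init) ∧
      (G.isReach s1 ↔ G.isReach s2)) ∧
    (∀ s1', G.E s1 s1' → ∃ s2', G.E s2 s2' ∧ R s1' s2') ∧
    (∀ s2', G.E s2 s2' → ∃ s1', G.E s1 s1' ∧ R s1' s2')

/-- The pre-game `⟨Init, Safe ∖ F, Reach ∖ F, Pre(Enf(F, G))⟩`. -/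
def preGame (G : Game S) (F : S → S → Prop) : Game S where
  isReach := G.isReach
  Safe := fun a b => G.Safe a b ∧ ¬ F a b
  Reach := fun a b => G.Reach a b ∧ ¬ F a b
  Init := G.Init
  Goal := Pre (G.Enf F)
  safe_src := fun a b h => G.safe_src a b h.1
  reach_src := fun a b h => G.reach_src a b h.1

/-- The post-game: transitions restricted to sources in `φ`. -/
def postGame (G : Game S) (φ : Set S) : Game S where
  isReach := G.isReach
  Safe := fun a b => G.Safe a b ∧ a ∈ φ
  Reach := fun a b => G.Reach a b ∧ a ∈ φ
  Init := G.Init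
  Goal := G.Goal
  safe_src := fun a b h => G.safe_src a b h.1
  reach_src := fun a b h => G.reach_src a b h.1

end Game

/-- If REACH wins from every state in `Post T`, then REACH wins
from every state in `Pre (Enf T G)`. -/
theorem reach_wins_from_pre_enf {S : Type u} (G : Game S) (T : S → S → Prop)
    (hPost : ∀ s' ∈ Game.Post T, G.ReachWinsFrom s') :
    ∀ s ∈ Game.Pre (G.Enf T), G.ReachWinsFrom s := by
  classical
  rintro s ⟨s', hE, hT, hEnf⟩
  have hs' : s' ∈ Game.Post T := ⟨s, hT⟩
  have hτ : ∀ t : S, ∃ σ : List S → S, G.IsReachStrategy σ ∧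
      (t ∈ Game.Post T → G.WinningReachStrategyFrom σ t) := by
    intro t
    by_cases ht : t ∈ Game.Post T
    · obtain ⟨σ, h⟩ := hPost t ht
      exact ⟨σ, h.1, fun _ => h⟩
    · obtain ⟨σ, h⟩ := hPost s' hs'
      exact ⟨σ, h.1, fun h' => absurd h' ht⟩
  choose τ hτ1 hτ2 using hτ
  let σ : List S → S := fun l => match l with
    | [] => s
    | [a] => if a = s then s' else τ s' [a]
    | _ :: b :: l => τ b (b :: l)
  refine ⟨σ, ?_, ?_⟩
  · intro ω x hx hnt
    match ω with
    | [] =>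
      show G.Reach x (if x = s then s' else τ s' [x])
      split_ifs with h
      · subst h
        rcases hE with h | h
        · exact absurd hx (G.safe_src _ _ h)
        · exact h
      · exact hτ1 s' [] x hx hnt
    | [a] => exact hτ1 x [] x hx hnt
    | a :: b :: l => exact hτ1 b (b :: l) x hx hnt
  · intro p hp0 hc
    obtain ⟨m, hm⟩ : ∃ m : ℕ∞, p.len = m + 1 := by
      cases h : p.len using ENat.recTopCoe with
      | top => exact ⟨⊤, by simp⟩
      | coe n =>
        cases n with
        | zero => exact absurd hE (hp0 ▸ p.fin_trap 0 h s')
        | succ n => exact ⟨n, by simp⟩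
    have hlt : ∀ i : ℕ, (i : ℕ∞) < m → ((i + 1 : ℕ) : ℕ∞) < p.len := by
      intro i hi
      rw [hm]
      push_cast
      exact (ENat.add_lt_add_iff_right (by simp)).2 hi
    have h0 : ((0 : ℕ) : ℕ∞) < p.len := by
      rw [hm]; simp
    have h1 : p.seq 1 ∈ Game.Post T := by
      rcases p.step 0 h0 with h | h
      · rw [hp0] at h
        exact ⟨s, hEnf _ h⟩
      · have h2 := hc 0 h0 (G.reach_src _ _ h)
        have h3 : p.seq 1 = s' := by
          rw [show p.seq 1 = p.seq (0 + 1) from rfl, h2]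
          show (if p.seq 0 = s then s' else τ s' [p.seq 0]) = s'
          rw [if_pos hp0]
        rw [h3]; exact hs'
    let q : G.Play :=
      { seq := fun i => p.seq (i + 1)
        len := m
        step := fun i hi => p.step (i + 1) (hlt i hi)
        fin_trap := fun n hn => p.fin_trap (n + 1) (by rw [hm, hn]; simp) }
    obtain ⟨k, hk, hg⟩ := (hτ2 _ h1).2 q rfl (by
      intro i hi hr
      have := hc (i + 1) (hlt i hi) hr
      show p.seq (i + 1 + 1) = _
      rw [this]
      simp only [Game.listPrefix, List.range_succ_eq_map, List.map_cons, List.map_map]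
      rfl)
    refine ⟨k + 1, ?_, hg⟩
    rw [hm]
    push_cast
    exact add_le_add_left hk 1
end

section
/- Let G be a reachability game with Init ∩ Goal = ∅. A safety strategy σ_S is winning from every initial state of G if and only if there exists a necessary subgoal C for G such that for every play s0 s1 … of G consistent with σ_S there is no index n with (s_n, s_{n+1}) ∈ C. -/
universe u

/-- a safety strategy is winning from every initial state iff
there is a necessary subgoal never crossed by plays consistent with it. -/
theorem safe_strategy_winning_iff_avoids_necessary_subgoal {S : Type u}
    (G : Game S) (hdisj : G.Init ∩ G.Goal = ∅)
    (σ : List S → S) (hσ : G.IsSafeStrategy σ) :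
    (∀ s ∈ G.Init, G.WinningSafeStrategyFrom σ s) ↔
      (∃ C : S → S → Prop, G.NecessarySubgoal C ∧
        ∀ p : G.Play, p.seq 0 ∈ G.Init → G.ConsistentS σ p →
          ¬ ∃ n : ℕ, (n : ℕ∞) < p.len ∧ C (p.seq n) (p.seq (n + 1))) := by
  constructor
  · intro h
    refine ⟨fun _ b => b ∈ G.Goal, ?_, ?_⟩
    · intro p hp n hn hg
      cases n with
      | zero =>
        exfalso
        have : p.seq 0 ∈ G.Init ∩ G.Goal := ⟨hp, hg⟩
        rw [hdisj] at this
        exact this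
      | succ m => exact ⟨m, Nat.lt_succ_self m, hg⟩
    · rintro p hp hc ⟨n, hn, hg⟩
      exact (h _ hp).2 p rfl hc ⟨n + 1, by
        push_cast
        exact Order.add_one_le_of_lt hn, hg⟩
  · rintro ⟨C, hC, hav⟩ s hs
    refine ⟨hσ, ?_⟩
    rintro p rfl hc ⟨n, hn, hg⟩
    obtain ⟨k, hk, hCk⟩ := hC p hs n hn hg
    exact hav p hs hc ⟨k, lt_of_lt_of_le (by exact_mod_cast hk) hn, hCk⟩
end

section
/- Let G be a reachability game with Init ∩ Goal = ∅, and let φ ⊆ S satisfy Goal ⊆ φ and Init ∩ φ = ∅ (a semantic Craig interpolant between Init and Goal). Then the instantiation Instantiate(φ, G) = {(s, s') ∈ E | s ∉ φ and s' ∈ φ} is a necessary subgoal for G. -/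
universe u

/-- the instantiation of a semantic Craig interpolant between
`Init` and `Goal` is a necessary subgoal. -/
theorem instantiate_interpolant_necessary_subgoal {S : Type u} (G : Game S)
    (hdisj : G.Init ∩ G.Goal = ∅) (φ : Set S)
    (hGoal : G.Goal ⊆ φ) (hInit : G.Init ∩ φ = ∅) :
    G.NecessarySubgoal (fun s s' => G.E s s' ∧ s ∉ φ ∧ s' ∈ φ) := by
  intro p h0 n hn hg
  have h0' : p.seq 0 ∉ φ := fun h => by
    have : p.seq 0 ∈ G.Init ∩ φ := ⟨h0, h⟩
    rw [hInit] at this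
    exact this
  by_contra hcon
  have key : ∀ m : ℕ, m ≤ n → p.seq m ∉ φ := by
    intro m
    induction m with
    | zero => intro _; exact h0'
    | succ k ih =>
      intro hk hmem
      have hlt : (k : ℕ∞) < p.len :=
        lt_of_lt_of_le (by exact_mod_cast (show k < n by omega)) hn
      exact hcon ⟨k, by omega, p.step k hlt, ih (by omega), hmem⟩
  exact key n le_rfl (hGoal hg)
end

section
/- Let G be a reachability game, let C be a necessary subgoal for G, and let F = {(s, s') ∈ C | REACH wins from s' in G} (the largest sufficient subgoal included in C). Then for every initial state s ∈ Init: REACH wins from s in G if and only if REACH wins from s in the pre-game G_pre = ⟨Init, Safe ∖ F, Reach ∖ F, Pre(Enf(F, G))⟩. -/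
universe u

namespace Game

variable {S : Type u}

theorem listPrefix_succ (f : ℕ → S) (n : ℕ) :
    listPrefix f (n + 1) = listPrefix f n ++ [f n] := by
  simp [listPrefix, List.range_succ]

theorem listPrefix_cons (f : ℕ → S) (n : ℕ) :
    listPrefix f (n + 1) = f 0 :: listPrefix (fun i => f (i + 1)) n := by
  simp [listPrefix, List.range_succ_eq_map, Function.comp_def]

/-- The history generated by `σ` from `s`. -/
def hist (σ : List S → S) (s : S) : ℕ → List S
  | 0 => [s]
  | n + 1 => hist σ s n ++ [σ (hist σ s n)]

/-- The sequence generated by `σ` from `s`. -/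
def genSeq (σ : List S → S) (s : S) : ℕ → S
  | 0 => s
  | n + 1 => σ (hist σ s n)

theorem prefix_genSeq (σ : List S → S) (s : S) (n : ℕ) :
    listPrefix (genSeq σ s) (n + 1) = hist σ s n := by
  induction n with
  | zero => simp [listPrefix, hist, genSeq]
  | succ n ih => rw [listPrefix_succ, ih]; simp [hist, genSeq]

open Classical in
/-- Every choice function generates a play. -/
theorem exists_play (G : Game S) (σ : List S → S) (s : S)
    (hσ : ∀ l t, ¬ G.Trap t → G.E t (σ (l ++ [t]))) :
    ∃ p : G.Play, p.seq 0 = s ∧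
      ∀ i : ℕ, p.seq (i + 1) = σ (listPrefix p.seq (i + 1)) := by
  have hstep : ∀ i, ¬ G.Trap (genSeq σ s i) → G.E (genSeq σ s i) (genSeq σ s (i + 1)) := by
    intro i hi
    have := hσ (listPrefix (genSeq σ s) i) _ hi
    rwa [← listPrefix_succ, prefix_genSeq] at this
  have hseq : ∀ i, genSeq σ s (i + 1) = σ (listPrefix (genSeq σ s) (i + 1)) := by
    intro i; rw [prefix_genSeq]; rfl
  by_cases h : ∃ n, G.Trap (genSeq σ s n)
  · refine ⟨⟨genSeq σ s, (Nat.find h : ℕ), ?_, ?_⟩, rfl, hseq⟩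
    · intro i hi
      exact hstep i (Nat.find_min h (by exact_mod_cast hi))
    · intro n hn
      have : Nat.find h = n := by exact_mod_cast hn
      rw [← this]; exact Nat.find_spec h
  · refine ⟨⟨genSeq σ s, ⊤, ?_, ?_⟩, rfl, hseq⟩
    · intro i _
      exact hstep i (fun hh => h ⟨i, hh⟩)
    · intro n hn
      exact absurd hn.symm (ENat.coe_ne_top n)

/-- Attractor of the goal. -/
inductive Attr (G : Game S) : S → Prop
  | goal (s : S) : s ∈ G.Goal → Attr G s
  | reach (s t : S) : G.Reach s t → Attr G t → Attr G s
  | safe (s t : S) : G.Safe s t → (∀ u, G.Safe s u → Attr G u) → Attr G s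

theorem exists_default (G : Game S) : ∃ f : S → S, ∀ s, ¬ G.Trap s → G.E s (f s) := by
  have : ∀ s, ∃ t, ¬ G.Trap s → G.E s t := by
    intro s
    by_cases h : G.Trap s
    · exact ⟨s, fun h' => absurd h h'⟩
    · simp only [Trap, not_forall, not_not] at h
      obtain ⟨t, ht⟩ := h
      exact ⟨t, fun _ => ht⟩
  choose f hf using this
  exact ⟨f, hf⟩

theorem E.reach {G : Game S} {s t : S} (h : G.E s t) (hs : G.isReach s) : G.Reach s t :=
  h.resolve_left fun h' => G.safe_src _ _ h' hs

theorem E.safe {G : Game S} {s t : S} (h : G.E s t) (hs : ¬ G.isReach s) : G.Safe s t :=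
  h.resolve_right fun h' => hs (G.reach_src _ _ h')

theorem attr_of_wins (G : Game S) {s : S} (h : G.ReachWinsFrom s) : G.Attr s := by
  classical
  obtain ⟨σ, hσ, hw⟩ := h
  by_contra hs
  have hf : ∀ t, ∃ u, ¬ G.isReach t → ¬ G.Trap t → G.Safe t u ∧ (¬ G.Attr t → ¬ G.Attr u) := by
    intro t
    by_cases h1 : G.isReach t
    · exact ⟨t, fun h => absurd h1 h⟩
    by_cases h2 : G.Trap t
    · exact ⟨t, fun _ h => absurd h2 h⟩
    obtain ⟨f, hf⟩ := exists_default G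
    have h3 := (hf t h2).safe h1
    by_cases h4 : ∃ u, G.Safe t u ∧ ¬ G.Attr u
    · obtain ⟨u, hu, hu'⟩ := h4
      exact ⟨u, fun _ _ => ⟨hu, fun _ => hu'⟩⟩
    · push Not at h4
      exact ⟨f t, fun _ _ => ⟨h3, fun h => absurd (Attr.safe t _ h3 h4) h⟩⟩
  choose f hf using hf
  let τ : List S → S := fun l => match l.getLast? with
    | none => s
    | some t => if G.isReach t then σ l else f t
  have hτ : ∀ l t, τ (l ++ [t]) = if G.isReach t then σ (l ++ [t]) else f t := by
    intro l t; simp [τ]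
  obtain ⟨p, h0, hp⟩ := exists_play G τ s (by
    intro l t ht
    rw [hτ]
    split_ifs with h
    · exact Or.inr (hσ l t h ht)
    · exact Or.inl (hf t h ht).1)
  have hp' : ∀ i, p.seq (i + 1) =
      if G.isReach (p.seq i) then σ (listPrefix p.seq (i + 1)) else f (p.seq i) := by
    intro i
    rw [hp, listPrefix_succ, hτ]
  obtain ⟨k, hk, hg⟩ := hw p h0 (by
    intro i _ hi
    rw [hp', if_pos hi])
  have key : ∀ i : ℕ, (i : ℕ∞) ≤ p.len → ¬ G.Attr (p.seq i) := by
    intro i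
    induction i with
    | zero => intro _; rwa [h0]
    | succ i ih =>
      intro hi
      have hlt : (i : ℕ∞) < p.len := lt_of_lt_of_le (by exact_mod_cast Nat.lt_succ_self i) hi
      have hE := p.step i hlt
      have ih := ih hlt.le
      by_cases h : G.isReach (p.seq i)
      · exact fun ha => ih (Attr.reach _ _ (hE.reach h) ha)
      · rw [hp', if_neg h]
        exact (hf _ h (fun ht => ht _ hE)).2 ih
  exact key k hk (Attr.goal _ hg)

/-- One-step lemma for winning. -/
theorem wins_of_step (G : Game S) (s : S)
    (h : s ∈ G.Goal ∨ (∃ t, G.Reach s t ∧ G.ReachWinsFrom t) ∨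
      ((∃ t, G.Safe s t) ∧ ∀ t, G.Safe s t → G.ReachWinsFrom t)) : G.ReachWinsFrom s := by
  classical
  obtain ⟨d, hd⟩ := exists_default G
  have hd' : G.IsReachStrategy (fun l => d (l.getLast?.getD s)) := by
    intro ω t h1 h2
    simpa using (hd t h2).reach h1
  have hch : ∀ u, ∃ σ, G.IsReachStrategy σ ∧
      (G.ReachWinsFrom u → G.WinningReachStrategyFrom σ u) := by
    intro u
    by_cases hu : G.ReachWinsFrom u
    · obtain ⟨σ, hσ⟩ := hu
      exact ⟨σ, hσ.1, fun _ => hσ⟩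
    · exact ⟨_, hd', fun h => absurd h hu⟩
  choose σ hσ hσw using hch
  have hf : ∀ t, ∃ u, G.isReach t → ¬ G.Trap t → G.Reach t u ∧
      ((∃ v, G.Reach t v ∧ G.ReachWinsFrom v) → G.ReachWinsFrom u) := by
    intro t
    by_cases h4 : ∃ v, G.Reach t v ∧ G.ReachWinsFrom v
    · obtain ⟨u, hu, hu'⟩ := h4
      exact ⟨u, fun _ _ => ⟨hu, fun _ => hu'⟩⟩
    · exact ⟨d t, fun h1 h2 => ⟨(hd t h2).reach h1, fun h => absurd h h4⟩⟩
  choose f hf using hf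
  let τ : List S → S := fun l => match l with
    | [] => s
    | [t] => f t
    | _ :: u :: l => σ u (u :: l)
  refine ⟨τ, ?_, ?_⟩
  · intro ω t h1 h2
    match ω with
    | [] => exact (hf t h1 h2).1
    | [a] => exact hσ t [] t h1 h2
    | a :: b :: l => exact hσ b (b :: l) t h1 h2
  · intro p h0 hp
    by_cases hg : s ∈ G.Goal
    · exact ⟨0, by simp, by rwa [h0]⟩
    have h := h.resolve_left hg
    have hnt : ¬ G.Trap s := by
      rcases h with ⟨t, ht, _⟩ | ⟨⟨t, ht⟩, _⟩
      · exact fun h => h t (Or.inr ht)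
      · exact fun h => h t (Or.inl ht)
    have hlen : p.len ≠ 0 := by
      intro hl
      have := p.fin_trap 0 (by simpa using hl)
      rw [h0] at this
      exact hnt this
    have hpos : ((0 : ℕ) : ℕ∞) < p.len := by
      simpa using pos_iff_ne_zero.mpr hlen
    have hE := p.step 0 hpos
    have hw1 : G.ReachWinsFrom (p.seq 1) := by
      rcases h with ⟨t, ht, htw⟩ | ⟨⟨t, ht⟩, hall⟩
      · have hr := G.reach_src _ _ ht
        have := hp 0 hpos (by rwa [h0])
        have e : p.seq 1 = f s := by
          rw [this]; simp [listPrefix, τ, h0]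
        rw [e]
        exact (hf s hr hnt).2 ⟨t, ht, htw⟩
      · have hr := G.safe_src _ _ ht
        rw [h0] at hE
        exact hall _ (hE.safe hr)
    obtain ⟨m, hm⟩ : ∃ m : ℕ∞, p.len = m + 1 :=
      ⟨p.len - 1, (tsub_add_cancel_of_le (ENat.one_le_iff_ne_zero.mpr hlen)).symm⟩
    have hlt : ∀ i : ℕ, (i : ℕ∞) < m → ((i + 1 : ℕ) : ℕ∞) < p.len := by
      intro i hi
      rw [hm]; push_cast
      exact (ENat.add_lt_add_iff_right (by simp)).mpr hi
    let q : G.Play := ⟨fun i => p.seq (i + 1), m, fun i hi => p.step (i + 1) (hlt i hi),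
      fun n hn => p.fin_trap (n + 1) (by rw [hm, hn]; push_cast; rfl)⟩
    obtain ⟨k, hk, hkg⟩ := (hσw _ hw1).2 q rfl (by
      intro i hi hr
      have := hp (i + 1) (hlt i hi) hr
      change p.seq (i + 1 + 1) = _
      rw [this, listPrefix_cons, listPrefix_cons])
    refine ⟨k + 1, ?_, hkg⟩
    rw [hm]; push_cast
    exact add_le_add_left hk 1

theorem wins_iff_attr (G : Game S) (s : S) : G.ReachWinsFrom s ↔ G.Attr s := by
  refine ⟨attr_of_wins G, fun h => ?_⟩
  induction h with
  | goal s hs => exact wins_of_step G s (Or.inl hs)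
  | reach s t hst _ ih => exact wins_of_step G s (Or.inr (Or.inl ⟨t, hst, ih⟩))
  | safe s t hst _ ih => exact wins_of_step G s (Or.inr (Or.inr ⟨⟨t, hst⟩, ih⟩))

/-- Every finite path extends to a play. -/
theorem extend_path (G : Game S) (ρ : ℕ → S) (n : ℕ)
    (h : ∀ i < n, G.E (ρ i) (ρ (i + 1))) :
    ∃ p : G.Play, (n : ℕ∞) ≤ p.len ∧ ∀ i ≤ n, p.seq i = ρ i := by
  classical
  obtain ⟨d, hd⟩ := exists_default G
  let τ : List S → S := fun l => match l.getLast? with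
    | none => ρ 0
    | some t => if G.E t (ρ l.length) then ρ l.length else d t
  have hτ : ∀ l t, τ (l ++ [t]) =
      if G.E t (ρ (l.length + 1)) then ρ (l.length + 1) else d t := by
    intro l t; simp [τ]
  obtain ⟨p, h0, hp⟩ := exists_play G τ (ρ 0) (by
    intro l t ht
    rw [hτ]
    split_ifs with h
    · exact h
    · exact hd t ht)
  have hseq : ∀ i ≤ n, p.seq i = ρ i := by
    intro i
    induction i with
    | zero => intro _; exact h0
    | succ i ih =>
      intro hi
      have hl : (listPrefix p.seq i).length = i := by simp [listPrefix]
      rw [hp, listPrefix_succ, hτ, hl, ih (by omega), if_pos (h i (by omega))]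
  refine ⟨p, ?_, hseq⟩
  by_contra hlt
  push Not at hlt
  obtain ⟨m, hm⟩ := ENat.ne_top_iff_exists.mp (ne_top_of_lt hlt)
  have hmn : m < n := by rw [← hm] at hlt; exact_mod_cast hlt
  have := p.fin_trap m hm.symm
  rw [hseq m hmn.le] at this
  exact this _ (h m hmn)

/-- `t` is reachable from `Init` by a path avoiding `C`. -/
def AvoidReach (G : Game S) (C : S → S → Prop) (t : S) : Prop :=
  ∃ (ρ : ℕ → S) (n : ℕ), ρ 0 ∈ G.Init ∧ ρ n = t ∧
    ∀ i < n, G.E (ρ i) (ρ (i + 1)) ∧ ¬ C (ρ i) (ρ (i + 1))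

theorem AvoidReach.step {G : Game S} {C : S → S → Prop} {t u : S} (h : G.AvoidReach C t)
    (hE : G.E t u) (hC : ¬ C t u) : G.AvoidReach C u := by
  obtain ⟨ρ, n, h0, hn, hs⟩ := h
  refine ⟨fun i => if i ≤ n then ρ i else u, n + 1, by simpa using h0, by simp, ?_⟩
  intro i hi
  rcases Nat.lt_succ_iff_lt_or_eq.mp hi with h | h
  · have h1 : i ≤ n := h.le
    have h2 : i + 1 ≤ n := h
    simp only [h1, h2, if_true]
    exact hs i h
  · subst h
    simp [hn, hE, hC]

theorem AvoidReach.not_goal {G : Game S} {C : S → S → Prop} {t : S} (h : G.AvoidReach C t)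
    (hC : G.NecessarySubgoal C) : t ∉ G.Goal := by
  obtain ⟨ρ, n, h0, hn, hs⟩ := h
  intro ht
  obtain ⟨p, hl, hp⟩ := extend_path G ρ n (fun i hi => (hs i hi).1)
  obtain ⟨k, hk, hkC⟩ := hC p (by rwa [hp 0 (by omega)]) n hl (by rwa [hp n le_rfl, hn])
  rw [hp k hk.le, hp (k + 1) hk] at hkC
  exact (hs k hk).2 hkC

end Game


/-- slicing along the largest sufficient subgoal `F` contained
in a necessary subgoal `C`: REACH wins from an initial state in `G` iff REACH
wins from it in the pre-game. -/
theorem reach_wins_iff_wins_preGame {S : Type u} (G : Game S)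
    (C : S → S → Prop) (hC : G.NecessarySubgoal C) :
    ∀ s ∈ G.Init,
      (G.ReachWinsFrom s ↔
        (G.preGame (fun a b => C a b ∧ G.ReachWinsFrom b)).ReachWinsFrom s) := by
  intro s hs
  simp only [Game.wins_iff_attr]
  constructor
  · intro h
    have hav : G.AvoidReach C s := ⟨fun _ => s, 0, hs, rfl, by simp⟩
    clear hs
    induction h with
    | goal t ht => exact absurd ht (hav.not_goal hC)
    | reach t u htu hu ih =>
      by_cases hc : C t u
      · exact Game.Attr.goal _ ⟨u, Or.inr htu, ⟨hc, hu⟩,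
          fun v hv => absurd (G.reach_src _ _ htu) (G.safe_src _ _ hv)⟩
      · exact Game.Attr.reach t u ⟨htu, fun h => hc h.1⟩ (ih (hav.step (Or.inr htu) hc))
    | safe t u htu hall ih =>
      by_cases hc : ∀ v, G.Safe t v → C t v
      · exact Game.Attr.goal _ ⟨u, Or.inl htu, ⟨hc u htu, hall u htu⟩,
          fun v hv => ⟨hc v hv, hall v hv⟩⟩
      · push Not at hc
        obtain ⟨v, hv, hcv⟩ := hc
        refine Game.Attr.safe t v ⟨hv, fun h => hcv h.1⟩ ?_
        rintro w ⟨hw, hw'⟩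
        have hcw : ¬ C t w := fun h => hw' ⟨h, hall w hw⟩
        exact ih w hw (hav.step (Or.inl hw) hcw)
  · intro h
    clear hs
    induction h with
    | goal t ht =>
      obtain ⟨u, hE, ⟨_, hu⟩, hall⟩ := ht
      rcases hE with hE | hE
      · exact Game.Attr.safe t u hE fun v hv => (hall v hv).2
      · exact Game.Attr.reach t u hE hu
    | reach t u htu _ ih => exact Game.Attr.reach t u htu.1 ih
    | safe t u htu _ ih =>
      refine Game.Attr.safe t u htu.1 fun v hv => ?_
      by_cases hF : C t v ∧ G.Attr v
      · exact hF.2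
      · exact ih v ⟨hv, hF⟩
end

section
/- Let G be a reachability game. If REACH has a winning symbolic reachability strategy from a state s, then REACH has a winning (concrete) reachability strategy from s. -/
universe u

/-- a winning symbolic reachability strategy from `s` yields a
winning concrete reachability strategy from `s`. -/
theorem reach_wins_of_winning_symbolic {S : Type u} (G : Game S)
    (𝔖 : S → S → Prop) (s : S) (h : G.WinningSymbolicReachFrom 𝔖 s) :
    G.ReachWinsFrom s := by
  classical
  obtain ⟨hE, hwin, hnext⟩ := h
  -- memoryless choice of a successor, preferring the symbolic strategy
  have hch : ∀ t : S, ∃ t' : S, ((∃ a, 𝔖 t a ∧ G.Reach t a) → 𝔖 t t' ∧ G.Reach t t') ∧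
      (G.isReach t → ¬ G.Trap t → G.Reach t t') := by
    intro t
    by_cases h1 : ∃ a, 𝔖 t a ∧ G.Reach t a
    · obtain ⟨a, ha⟩ := h1
      exact ⟨a, fun _ => ha, fun _ _ => ha.2⟩
    · by_cases h2 : ∃ a, G.Reach t a
      · obtain ⟨a, ha⟩ := h2
        exact ⟨a, fun h => absurd h h1, fun _ _ => ha⟩
      · refine ⟨t, fun h => absurd h h1, fun hr ht => absurd ?_ ht⟩
        rintro a (ha | ha)
        · exact G.safe_src _ _ ha hr
        · exact h2 ⟨a, ha⟩
  choose f hf1 hf2 using hch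
  refine ⟨fun l => f (l.getLast?.getD s), ?_, ?_⟩
  · intro ω t hr ht
    simpa using hf2 t hr ht
  · intro p hp0 hcons
    apply hwin p hp0
    intro n hn hpre
    have key : ∀ m, m ≤ n → G.PrefixConformsR 𝔖 p.seq m := by
      intro m
      induction m with
      | zero => intro _ j hj; omega
      | succ m ih =>
        intro hm j hj hr
        rcases Nat.lt_succ_iff_lt_or_eq.mp hj with hlt | rfl
        · exact ih (by omega) j hlt hr
        · have hpj : G.IsPlayPrefix p.seq j :=
            ⟨fun i hi => hpre.1 i (by omega), fun i hi => hpre.2.1 i (by omega),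
              fun ht => ht _ (hpre.1 j (by omega))⟩
          have hex := hnext p.seq j hp0 hpj (ih (by omega)) hr
          have hlt : (j : ℕ∞) < p.len :=
            lt_of_lt_of_le (by exact_mod_cast (show j < n by omega)) hn
          have hc := hcons j hlt hr
          have hl : (Game.listPrefix p.seq (j + 1)).getLast?.getD s = p.seq j := by
            simp [Game.listPrefix, List.range_succ]
          simp only [hl] at hc
          rw [hc]
          exact (hf1 _ hex).1
    exact key n le_rfl
end

section
/- Let G be a reachability game, let φ ⊆ S, and let G_post be the reachability game obtained from G by keeping the same state set, partition and goal set Goal, and restricting both transition relations to sources in φ (i.e., transition relations Safe ∩ (φ × S) and Reach ∩ (φ × S)). If 𝔖 is a winning symbolic reachability strategy from a state s in G_post, then 𝔖 is also a winning symbolic reachability strategy from s in G. -/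
universe u

/-- A conforming goal-free path of `G` leaving `φ` at index `k` (first time) contradicts
winning in the post-game. -/
theorem postGame_exit_false {S : Type u} (G : Game S) (φ : Set S)
    (𝔖 : S → S → Prop) (s : S)
    (h : (G.postGame φ).WinningSymbolicReachFrom 𝔖 s) (f : ℕ → S) (k : ℕ) (h0 : f 0 = s)
    (hstep : ∀ i < k, G.E (f i) (f (i + 1))) (hin : ∀ i < k, f i ∈ φ) (hk : f k ∉ φ)
    (hgoal : ∀ i ≤ k, f i ∉ G.Goal)
    (hconf : ∀ n < k, G.IsPlayPrefix f n → G.PrefixConformsR 𝔖 f n) : False := by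
  have htrap : (G.postGame φ).Trap (f k) := by
    rintro s' (⟨_, h⟩ | ⟨_, h⟩) <;> exact hk h
  let p : (G.postGame φ).Play :=
    { seq := f
      len := (k : ℕ∞)
      step := fun i hi => by
        have hi' : i < k := by exact_mod_cast hi
        rcases hstep i hi' with h | h
        · exact Or.inl ⟨h, hin i hi'⟩
        · exact Or.inr ⟨h, hin i hi'⟩
      fin_trap := fun n hn => by
        have : k = n := by exact_mod_cast hn
        exact this ▸ htrap }
  obtain ⟨j, hj, hjg⟩ := h.2.1 p h0 (by
    intro n hn hp
    have hn' : n ≤ k := Nat.cast_le.mp (show (n : ℕ∞) ≤ (k : ℕ∞) from hn)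
    rcases Nat.lt_or_eq_of_le hn' with hlt | rfl
    · refine hconf n hlt ⟨fun i hi => hstep i (hi.trans hlt), hp.2.1, fun ht => ?_⟩
      exact ht _ (hstep n hlt)
    · exact absurd htrap hp.2.2)
  exact hgoal j (Nat.cast_le.mp (show (j : ℕ∞) ≤ (k : ℕ∞) from hj)) hjg

/-- a winning symbolic reachability strategy in the post-game is
also winning in `G`. -/
theorem winning_symbolic_of_postGame {S : Type u} (G : Game S) (φ : Set S)
    (𝔖 : S → S → Prop) (s : S)
    (h : (G.postGame φ).WinningSymbolicReachFrom 𝔖 s) :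
    G.WinningSymbolicReachFrom 𝔖 s := by
  classical
  refine ⟨fun a b hab => ?_, fun p h0 hp => ?_, fun ρ n h0 hpre hconf hr => ?_⟩
  · rcases h.1 a b hab with h | h
    · exact Or.inl h.1
    · exact Or.inr h.1
  · by_contra hnw
    have hng : ∀ k : ℕ, (k : ℕ∞) ≤ p.len → p.seq k ∉ G.Goal :=
      fun k hk hg => hnw ⟨k, hk, hg⟩
    by_cases hex : ∃ k : ℕ, (k : ℕ∞) ≤ p.len ∧ p.seq k ∉ φ
    · obtain ⟨hk, hkφ⟩ := Nat.find_spec hex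
      have hmin := fun m => Nat.find_min hex (m := m)
      generalize Nat.find hex = k at hk hkφ hmin
      have hlt : ∀ i < k, (i : ℕ∞) < p.len := fun i hi =>
        lt_of_lt_of_le (by exact_mod_cast hi) hk
      refine postGame_exit_false G φ 𝔖 s h p.seq k h0 (fun i hi => p.step i (hlt i hi))
        (fun i hi => ?_) hkφ (fun i hi => hng i (le_trans (by exact_mod_cast hi) hk))
        (fun n hn => hp n (hlt n hn).le)
      by_contra hc
      exact hmin i hi ⟨(hlt i hi).le, hc⟩
    · push Not at hex
      let q : (G.postGame φ).Play :=
        { seq := p.seq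
          len := p.len
          step := fun i hi => by
            rcases p.step i hi with h | h
            · exact Or.inl ⟨h, hex i hi.le⟩
            · exact Or.inr ⟨h, hex i hi.le⟩
          fin_trap := fun n hn s' hs' => p.fin_trap n hn s' (by
            rcases hs' with h | h
            · exact Or.inl h.1
            · exact Or.inr h.1) }
      refine hnw (h.2.1 q h0 fun n hn hpn => hp n hn ⟨fun i hi => ?_, hpn.2.1, fun ht => ?_⟩)
      · exact p.step i (lt_of_lt_of_le (by exact_mod_cast hi) hn)
      · refine hpn.2.2 fun s' hs' => ht s' ?_
        rcases hs' with h | h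
        · exact Or.inl h.1
        · exact Or.inr h.1
  · by_cases hex : ∃ k : ℕ, k ≤ n ∧ ρ k ∉ φ
    · exfalso
      obtain ⟨hk, hkφ⟩ := Nat.find_spec hex
      have hmin := fun m => Nat.find_min hex (m := m)
      generalize Nat.find hex = k at hk hkφ hmin
      refine postGame_exit_false G φ 𝔖 s h ρ k h0 (fun i hi => hpre.1 i (by omega))
        (fun i hi => ?_) hkφ (fun i hi => hpre.2.1 i (by omega))
        (fun m hm _ j hj => hconf j (by omega))
      by_contra hc
      exact hmin i hi ⟨by omega, hc⟩
    · push Not at hex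
      have hpost : (G.postGame φ).IsPlayPrefix ρ n := by
        refine ⟨fun i hi => ?_, hpre.2.1, fun ht => ?_⟩
        · rcases hpre.1 i hi with h | h
          · exact Or.inl ⟨h, hex i hi.le⟩
          · exact Or.inr ⟨h, hex i hi.le⟩
        · refine hpre.2.2 fun s' hs' => ht s' ?_
          rcases hs' with h | h
          · exact Or.inl ⟨h, hex n le_rfl⟩
          · exact Or.inr ⟨h, hex n le_rfl⟩
      obtain ⟨s', hs, hR⟩ := h.2.2 ρ n h0 hpost hconf hr
      exact ⟨s', hs, hR.1⟩
end

section
/- Let G be a reachability game and let φ ⊆ S with Goal ⊆ φ. Suppose φ perfectly partitions G, i.e., there is no transition (s, s') ∈ E with s ∈ φ, s' ∉ φ and s ∉ Goal. Let G_post be the reachability game obtained from G by keeping the same state set, partition and goal set Goal, and restricting both transition relations to sources in φ. Then for every state s ∈ Post(Instantiate(φ, G)) (where Instantiate(φ, G) = {(s, s') ∈ E | s ∉ φ and s' ∈ φ}): REACH wins from s in G_post if and only if REACH wins from s in G. -/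
universe u

theorem Game.mem_of_avoid {S : Type u} (G : Game S) (φ : Set S)
    (hperf : ∀ s s', G.E s s' → s ∈ φ → s' ∉ φ → s ∈ G.Goal)
    (f : ℕ → S) (len : ℕ∞) (h0 : f 0 ∈ φ)
    (hstep : ∀ i : ℕ, (i : ℕ∞) < len → G.E (f i) (f (i + 1)))
    (hav : ∀ k : ℕ, (k : ℕ∞) ≤ len → f k ∉ G.Goal) :
    ∀ k : ℕ, (k : ℕ∞) ≤ len → f k ∈ φ := by
  intro k
  induction k with
  | zero => intro _; exact h0
  | succ k ih =>
    intro hk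
    have hlt : (k : ℕ∞) < len := lt_of_lt_of_le (by exact_mod_cast Nat.lt_succ_self k) hk
    by_contra hn
    exact hav k hlt.le (hperf _ _ (hstep k hlt) (ih hlt.le) hn)

theorem Game.listPrefix_succ_s11 {S : Type u} (f : ℕ → S) (n : ℕ) :
    Game.listPrefix f (n + 1) = Game.listPrefix f n ++ [f n] := by
  simp [Game.listPrefix, List.range_succ]

/-- if `φ` perfectly partitions `G` and contains `Goal`, then
for states behind the subgoal `Instantiate(φ, G)`, winning in the post-game
and winning in `G` coincide for REACH. -/
theorem reach_wins_postGame_iff_of_perfect_partition {S : Type u} (G : Game S)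
    (φ : Set S) (hGoal : G.Goal ⊆ φ)
    (hperf : ∀ s s', G.E s s' → s ∈ φ → s' ∉ φ → s ∈ G.Goal) :
    ∀ s ∈ Game.Post (fun a b => G.E a b ∧ a ∉ φ ∧ b ∈ φ),
      ((G.postGame φ).ReachWinsFrom s ↔ G.ReachWinsFrom s) := by
  classical
  rintro s ⟨a, -, -, hs⟩
  constructor
  · rintro ⟨σ, hσ, hwin⟩
    let τ : List S → S := fun l =>
      if h : ∃ b, ∃ a, l.getLast? = some a ∧ a ∉ φ ∧ G.Reach a b then h.choose else σ l
    have hτφ : ∀ (ω : List S) (x : S), x ∈ φ → τ (ω ++ [x]) = σ (ω ++ [x]) := by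
      intro ω x hx
      apply dif_neg
      rintro ⟨b, c, hc, hcφ, -⟩
      simp at hc
      exact hcφ (hc ▸ hx)
    refine ⟨τ, ?_, ?_⟩
    · intro ω x hx hnt
      have hnt' := hnt
      simp only [Game.Trap, not_forall, not_not] at hnt
      obtain ⟨y, hy⟩ := hnt
      have hy' : G.Reach x y := hy.resolve_left (fun h => G.safe_src _ _ h hx)
      by_cases hxφ : x ∈ φ
      · rw [hτφ ω x hxφ]
        exact (hσ ω x hx (fun ht => ht y (Or.inr ⟨hy', hxφ⟩))).1
      · have h : ∃ b, ∃ a, (ω ++ [x]).getLast? = some a ∧ a ∉ φ ∧ G.Reach a b :=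
          ⟨y, x, by simp, hxφ, hy'⟩
        have e : τ (ω ++ [x]) = h.choose := dif_pos h
        rw [e]
        obtain ⟨c, hc, -, hr⟩ := h.choose_spec
        have hc' : x = c := by simpa using hc
        rw [← hc'] at hr
        exact hr
    · intro p hp0 hcons
      by_contra hlose
      have hav : ∀ k : ℕ, (k : ℕ∞) ≤ p.len → p.seq k ∉ G.Goal :=
        fun k hk hg => hlose ⟨k, hk, hg⟩
      have hin := G.mem_of_avoid φ hperf p.seq p.len (hp0 ▸ hs) p.step hav
      let q : (G.postGame φ).Play :=
        { seq := p.seq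
          len := p.len
          step := fun i hi => (p.step i hi).imp (fun h => ⟨h, hin i hi.le⟩)
            (fun h => ⟨h, hin i hi.le⟩)
          fin_trap := fun n hn y hy => p.fin_trap n hn y (hy.imp (fun h => h.1) (fun h => h.1)) }
      refine hlose (hwin q hp0 ?_)
      intro i hi hr
      have := hcons i hi hr
      rw [Game.listPrefix_succ_s11, hτφ _ _ (hin i hi.le)] at this
      rw [Game.listPrefix_succ_s11]
      exact this
  · rintro ⟨σ, hσ, hwin⟩
    refine ⟨σ, ?_, ?_⟩
    · intro ω x hx hnt
      simp only [Game.Trap, not_forall, not_not] at hnt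
      obtain ⟨y, hy⟩ := hnt
      have hxφ : x ∈ φ := hy.elim (fun h => h.2) (fun h => h.2)
      exact ⟨hσ ω x hx (fun ht => ht y (hy.imp (fun h => h.1) (fun h => h.1))), hxφ⟩
    · intro p hp0 hcons
      by_contra hlose
      have hav : ∀ k : ℕ, (k : ℕ∞) ≤ p.len → p.seq k ∉ G.Goal :=
        fun k hk hg => hlose ⟨k, hk, hg⟩
      have hstep : ∀ i : ℕ, (i : ℕ∞) < p.len → G.E (p.seq i) (p.seq (i + 1)) :=
        fun i hi => (p.step i hi).imp (fun h => h.1) (fun h => h.1)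
      have hin := G.mem_of_avoid φ hperf p.seq p.len (hp0 ▸ hs) hstep hav
      let q : G.Play :=
        { seq := p.seq
          len := p.len
          step := hstep
          fin_trap := fun n hn y hy => p.fin_trap n hn y
            (hy.imp (fun h => ⟨h, hin n hn.ge⟩) (fun h => ⟨h, hin n hn.ge⟩)) }
      exact hlose (hwin q hp0 hcons)
end

section
/- Let G, G_T and G_F be reachability games over the same state set S and the same partition into S_SAFE and S_REACH, with transition relations (Safe, Reach), (Safe_T, Reach_T) and (Safe_F, Reach_F) respectively. Let T, F ⊆ S × S be transition predicates such that Pre(T) ∩ Pre(F) = ∅, T ⊆ Safe_T ∪ Reach_T ⊆ Safe ∪ Reach, F ⊆ Safe_F ∪ Reach_F ⊆ Safe ∪ Reach, Enf(T, G_T) = ∅ and Enf(F, G_F) = ∅. Then Enf(T ∪ F, G) = ∅. -/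
universe u

/-- unavoidability is preserved under disjoint union of
subgoals coming from subgames. -/
theorem enf_union_empty {S : Type u} (G GT GF : Game S)
    (hpartT : GT.isReach = G.isReach) (hpartF : GF.isReach = G.isReach)
    (T F : S → S → Prop)
    (hdisj : Game.Pre T ∩ Game.Pre F = ∅)
    (hT1 : ∀ a b, T a b → GT.E a b) (hT2 : ∀ a b, GT.E a b → G.E a b)
    (hF1 : ∀ a b, F a b → GF.E a b) (hF2 : ∀ a b, GF.E a b → G.E a b)
    (hET : ∀ a b, ¬ GT.Enf T a b) (hEF : ∀ a b, ¬ GF.Enf F a b) :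
    ∀ a b, ¬ G.Enf (fun x y => T x y ∨ F x y) a b := by
  have key : ∀ (H : Game S), H.isReach = G.isReach → (∀ a b, H.E a b → G.E a b) →
      ∀ a b, H.Safe a b → G.Safe a b := by
    intro H hp hE a b h
    rcases hE a b (Or.inl h) with h1 | h1
    · exact h1
    · exact absurd (hp ▸ G.reach_src a b h1) (H.safe_src a b h)
  have dis : ∀ a b c, T a b → F a c → False := by
    intro a b c h1 h2
    have : a ∈ Game.Pre T ∩ Game.Pre F := ⟨⟨b, h1⟩, ⟨c, h2⟩⟩
    rw [hdisj] at this
    exact this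
  rintro a b ⟨_, hTF, hall⟩
  rcases hTF with h | h
  · refine hET a b ⟨hT1 a b h, h, fun c hc => ?_⟩
    rcases hall c (key GT hpartT hT2 a c hc) with h1 | h1
    · exact h1
    · exact (dis a b c h h1).elim
  · refine hEF a b ⟨hF1 a b h, h, fun c hc => ?_⟩
    rcases hall c (key GF hpartF hF2 a c hc) with h1 | h1
    · exact (dis a c b h1 h).elim
    · exact h1
end

section
/- Let G be a reachability game, let R be a bisimulation on G, and let (s1, s2) ∈ R. Then REACH wins from s1 in G if and only if REACH wins from s2 in G. -/
universe u

namespace BisimAux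

open Game

variable {S : Type u}

open Classical in
/-- Next simulated state, given the simulated history and the new real state. -/
noncomputable def nx (G : Game S) (R : S → S → Prop) (σ : List S → S) (s1 : S)
    (acc : List S) (t : S) : S :=
  match acc.getLast? with
  | none => s1
  | some s => if G.isReach s then σ acc
      else @Classical.epsilon S ⟨s1⟩ (fun s' => G.E s s' ∧ R s' t)

/-- The simulated history. -/
noncomputable def sim (G : Game S) (R : S → S → Prop) (σ : List S → S) (s1 : S)
    (l : List S) : List S :=
  l.foldl (fun acc t => acc ++ [nx G R σ s1 acc t]) []

/-- The transferred strategy. -/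
noncomputable def strat (G : Game S) (R : S → S → Prop) (σ : List S → S) (s1 : S)
    (l : List S) : S :=
  @Classical.epsilon S ⟨s1⟩ (fun t' => ∀ t, l.getLast? = some t →
    G.Reach t t' ∧ ((∃ t'', G.Reach t t'' ∧ R (σ (sim G R σ s1 l)) t'') →
      R (σ (sim G R σ s1 l)) t'))

theorem E_reach (G : Game S) {s t : S} (hs : G.isReach s) (h : G.E s t) : G.Reach s t :=
  h.resolve_left (fun h' => G.safe_src _ _ h' hs)

theorem strat_spec (G : Game S) (R : S → S → Prop) (σ : List S → S) (s1 : S)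
    (ω : List S) (t : S) (hr : G.isReach t) (ht : ¬ G.Trap t) :
    G.Reach t (strat G R σ s1 (ω ++ [t])) ∧
      ((∃ t'', G.Reach t t'' ∧ R (σ (sim G R σ s1 (ω ++ [t]))) t'') →
      R (σ (sim G R σ s1 (ω ++ [t]))) (strat G R σ s1 (ω ++ [t]))) := by
  have key : ∃ t', ∀ u, (ω ++ [t]).getLast? = some u →
    G.Reach u t' ∧ ((∃ t'', G.Reach u t'' ∧ R (σ (sim G R σ s1 (ω ++ [t]))) t'') →
      R (σ (sim G R σ s1 (ω ++ [t]))) t') := by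
    by_cases hc : ∃ t'', G.Reach t t'' ∧ R (σ (sim G R σ s1 (ω ++ [t]))) t''
    · obtain ⟨t'', h1, h2⟩ := hc
      refine ⟨t'', fun u hu => ?_⟩
      simp at hu
      subst hu
      exact ⟨h1, fun _ => h2⟩
    · have : ∃ t', G.E t t' := by
        by_contra hn
        exact ht (fun s' hs' => hn ⟨s', hs'⟩)
      obtain ⟨t', h1⟩ := this
      refine ⟨t', fun u hu => ?_⟩
      simp at hu
      subst hu
      exact ⟨E_reach G hr h1, fun h => absurd h hc⟩
  exact (Classical.epsilon_spec key) t (by simp)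

theorem listPrefix_succ (f : ℕ → S) (n : ℕ) :
    listPrefix f (n + 1) = listPrefix f n ++ [f n] := by
  simp [listPrefix, List.range_succ]

theorem forward (G : Game S) (R : S → S → Prop) (hR : G.IsBisimulation R)
    (s1 s2 : S) (h : R s1 s2) (hw : G.ReachWinsFrom s1) : G.ReachWinsFrom s2 := by
  obtain ⟨σ, hσ, hwin⟩ := hw
  refine ⟨strat G R σ s1, fun ω s hr ht => (strat_spec G R σ s1 ω s hr ht).1, ?_⟩
  intro p hp0 hcons
  let q : ℕ → S := fun n => nx G R σ s1 (sim G R σ s1 (listPrefix p.seq n)) (p.seq n)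
  have hq : ∀ n, sim G R σ s1 (listPrefix p.seq n) = listPrefix q n := by
    intro n
    induction n with
    | zero => simp [sim, listPrefix]
    | succ n ih =>
      rw [listPrefix_succ, listPrefix_succ, ← ih]
      simp only [sim, List.foldl_append, List.foldl_cons, List.foldl_nil]
      rfl
  have hq0 : q 0 = s1 := by simp [q, sim, listPrefix, nx]
  have hqr : ∀ n, G.isReach (q n) → q (n + 1) = σ (listPrefix q (n + 1)) := by
    intro n hn
    change nx G R σ s1 (sim G R σ s1 (listPrefix p.seq (n + 1))) (p.seq (n + 1)) = _
    rw [hq, listPrefix_succ q]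
    simp [nx, hn]
  have hqs : ∀ n, ¬ G.isReach (q n) →
      (∃ s', G.E (q n) s' ∧ R s' (p.seq (n + 1))) →
      G.E (q n) (q (n + 1)) ∧ R (q (n + 1)) (p.seq (n + 1)) := by
    intro n hn he
    have : q (n + 1) = @Classical.epsilon S ⟨s1⟩
        (fun s' => G.E (q n) s' ∧ R s' (p.seq (n + 1))) := by
      change nx G R σ s1 (sim G R σ s1 (listPrefix p.seq (n + 1))) (p.seq (n + 1)) = _
      rw [hq, listPrefix_succ q]
      simp [nx, hn]
    rw [this]
    exact Classical.epsilon_spec he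
  have hstep : ∀ n : ℕ, (n : ℕ∞) < p.len → R (q n) (p.seq n) →
      G.E (q n) (q (n + 1)) ∧ R (q (n + 1)) (p.seq (n + 1)) := by
    intro n hn hRn
    obtain ⟨⟨-, -, hiff⟩, hf, hb⟩ := hR _ _ hRn
    have hE := p.step n hn
    obtain ⟨s', hs', hRs'⟩ := hb _ hE
    by_cases hr : G.isReach (q n)
    · have h1 := hσ (listPrefix q n) (q n) hr (fun ht => ht _ hs')
      rw [← listPrefix_succ, ← hqr n hr] at h1
      refine ⟨Or.inr h1, ?_⟩
      obtain ⟨t'', ht'', hRt⟩ := hf _ (Or.inr h1)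
      have hr' := hiff.1 hr
      have h2 := (strat_spec G R σ s1 (listPrefix p.seq n) (p.seq n) hr'
        (fun ht => ht _ hE)).2
      rw [← listPrefix_succ, hq, ← hqr n hr, ← hcons n hn hr'] at h2
      exact h2 ⟨t'', E_reach G hr' ht'', hRt⟩
    · exact hqs n hr ⟨s', hs', hRs'⟩
  have hRall : ∀ n : ℕ, (n : ℕ∞) ≤ p.len → R (q n) (p.seq n) := by
    intro n
    induction n with
    | zero => intro _; rw [hq0, hp0]; exact h
    | succ n ih =>
      intro hn
      have hlt : (n : ℕ∞) < p.len :=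
        lt_of_lt_of_le (by exact_mod_cast Nat.lt_succ_self n) hn
      exact (hstep n hlt (ih hlt.le)).2
  let Q : G.Play :=
    { seq := q
      len := p.len
      step := fun i hi => (hstep i hi (hRall i hi.le)).1
      fin_trap := fun n hn s' hs' => by
        obtain ⟨-, hf, -⟩ := hR _ _ (hRall n hn.ge)
        obtain ⟨t', ht', -⟩ := hf _ hs'
        exact p.fin_trap n hn _ ht' }
  obtain ⟨k, hk, hg⟩ := hwin Q hq0 (fun i _ hr => hqr i hr)
  exact ⟨k, hk, (hR _ _ (hRall k hk)).1.1.1 hg⟩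

theorem converse (G : Game S) (R : S → S → Prop) (hR : G.IsBisimulation R) :
    G.IsBisimulation (fun a b => R b a) := by
  intro a b hab
  obtain ⟨⟨h1, h2, h3⟩, hf, hb⟩ := hR _ _ hab
  exact ⟨⟨h1.symm, h2.symm, h3.symm⟩, hb, hf⟩

end BisimAux

/-- bisimilar states are won by the same player (REACH side). -/
theorem bisimulation_preserves_reach_win {S : Type u} (G : Game S)
    (R : S → S → Prop) (hR : G.IsBisimulation R)
    (s1 s2 : S) (h : R s1 s2) :
    G.ReachWinsFrom s1 ↔ G.ReachWinsFrom s2 := by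
  exact ⟨BisimAux.forward G R hR s1 s2 h,
    BisimAux.forward G _ (BisimAux.converse G R hR) s2 s1 h⟩
end

section
/- Let G be a reachability game and let ∼ be a bisimulation on G that is also an equivalence relation on S. Let φ1, φ2 ⊆ S be unions of ∼-equivalence classes (i.e., closed under ∼), and let T = {(s, s') ∈ S × S | s ∈ φ1 and s' ∈ φ2}. Then Pre(Enf(T, G)) is a union of ∼-equivalence classes: if s1 ∼ s2 and s1 ∈ Pre(Enf(T, G)), then s2 ∈ Pre(Enf(T, G)). -/
universe u

/-- for `T = φ1 × φ2` with `φ1, φ2` unions of bisimulation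
classes, `Pre(Enf(T, G))` is a union of bisimulation classes. -/
theorem pre_enf_closed_under_bisim {S : Type u} (G : Game S)
    (R : S → S → Prop) (hBisim : G.IsBisimulation R) (hEquiv : Equivalence R)
    (φ1 φ2 : Set S)
    (hφ1 : ∀ a b, R a b → (a ∈ φ1 ↔ b ∈ φ1))
    (hφ2 : ∀ a b, R a b → (a ∈ φ2 ↔ b ∈ φ2))
    (s1 s2 : S) (hs : R s1 s2)
    (h1 : s1 ∈ Game.Pre (G.Enf (fun a b => a ∈ φ1 ∧ b ∈ φ2))) :
    s2 ∈ Game.Pre (G.Enf (fun a b => a ∈ φ1 ∧ b ∈ φ2)) := by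
  obtain ⟨s1', hE, ⟨ha, hb⟩, hS⟩ := h1
  obtain ⟨⟨_, _, hr⟩, hf, hk⟩ := hBisim s1 s2 hs
  obtain ⟨s2', hE2, hR⟩ := hf s1' hE
  have ha2 : s2 ∈ φ1 := (hφ1 _ _ hs).1 ha
  refine ⟨s2', hE2, ⟨ha2, (hφ2 _ _ hR).1 hb⟩, fun t ht => ⟨ha2, ?_⟩⟩
  obtain ⟨t1, hEt, hRt⟩ := hk t (Or.inl ht)
  rcases hEt with h | h
  · exact (hφ2 _ _ hRt).1 (hS t1 h).2
  · exact absurd (hr.1 (G.reach_src _ _ h)) (G.safe_src _ _ ht)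
end
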